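/- arXiv:0802.2581 — 7 statements merged into one kernel-verified Lean document; each statement's English description precedes it below -/
import Mathlib

section
/- Let K be a symmetric positive definite real matrix indexed by a finite set Δ, let δ ∈ Δ, and set Q1 := Δ \ {δ}. If i, j ∈ Q1 satisfy k_{ij} = 0 and additionally k_{iδ} = 0 or k_{jδ} = 0, then the (i, j) entry of ((K^{-1})_{Q1Q1})^{-1} is 0. (Consequently, eliminating a simplicial vertex of a graph preserves the zero pattern of the graphical model on the remaining vertices.) -/
open Matrix

/-- The `Δ1 × Δ2` submatrix of a matrix `A` indexed by `Δ`. -/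
def msub {Δ : Type*} (A : Matrix Δ Δ ℝ) (Δ1 Δ2 : Finset Δ) : Matrix Δ1 Δ2 ℝ :=
  A.submatrix (fun i => (i : Δ)) (fun j => (j : Δ))

/-!
Eliminating a block of variables from an invertible matrix `K`, i.e. restricting `K⁻¹` to the
remaining indices and inverting back, produces the Schur complement of the eliminated block in `K`.
Its `(i, j)` entry is `K i j` minus a sum of products of entries of row `i` and of column `j` of `K`
at eliminated indices (weighted by the inverse of the eliminated block), so no fill-in occurs at
`(i, j)` as soon as one of these two families of entries vanishes.
-/

section SchurComplement

variable {n R : Type*} [Fintype n] [DecidableEq n] [CommRing R]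
  {K : Matrix n n R} {p : n → Prop} [DecidablePred p]

/-- The Schur complement in `K` of the block of indices outside `p`, as a matrix indexed by the
subtype of `p`. It is meaningful only if that block is invertible, since `⁻¹` is otherwise `0`. -/
noncomputable def schurComplement (K : Matrix n n R) (p : n → Prop) [DecidablePred p] :
    Matrix {a // p a} {a // p a} R :=
  K.toBlock p p - K.toBlock p (¬p ·) * (K.toBlock (¬p ·) (¬p ·))⁻¹ * K.toBlock (¬p ·) p

theorem schurComplement_mul_toBlock_inv (hK : IsUnit K) (hp : IsUnit (K.toBlock (¬p ·) (¬p ·))) :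
    schurComplement K p * K⁻¹.toBlock p p = 1 := by
  set B := K.toBlock p (¬p ·)
  set C := K.toBlock (¬p ·) p
  set D := K.toBlock (¬p ·) (¬p ·)
  set L := K⁻¹.toBlock p p
  set M := K⁻¹.toBlock (¬p ·) p
  have hmul : K * K⁻¹ = 1 := K.mul_nonsing_inv ((isUnit_iff_isUnit_det K).1 hK)
  have hrow : K.toBlock p p * L + B * M = 1 := by
    rw [← toBlock_mul_eq_add, hmul, toBlock_one_self]
  have hrow_compl : C * L + D * M = 0 := by
    rw [← toBlock_mul_eq_add, hmul]
    exact toBlock_one_disjoint disjoint_compl_left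
  calc schurComplement K p * L
      = K.toBlock p p * L - B * (D⁻¹ * (C * L)) := by
        simp only [schurComplement, Matrix.sub_mul, Matrix.mul_assoc, B, C, D]
    _ = K.toBlock p p * L + B * (D⁻¹ * (D * M)) := by
        rw [eq_neg_of_add_eq_zero_left hrow_compl, Matrix.mul_neg, Matrix.mul_neg, sub_neg_eq_add]
    _ = K.toBlock p p * L + B * M := by
        rw [nonsing_inv_mul_cancel_left _ _ ((isUnit_iff_isUnit_det D).1 hp)]
    _ = 1 := hrow

theorem inv_toBlock_inv_eq_schurComplement (hK : IsUnit K)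
    (hp : IsUnit (K.toBlock (¬p ·) (¬p ·))) :
    (K⁻¹.toBlock p p)⁻¹ = schurComplement K p :=
  inv_eq_left_inv (schurComplement_mul_toBlock_inv hK hp)

theorem schurComplement_apply_eq_zero {i j : {a // p a}} (hij : K i j = 0)
    (h : (∀ d, ¬p d → K i d = 0) ∨ ∀ d, ¬p d → K d j = 0) :
    schurComplement K p i j = 0 := by
  rw [schurComplement, Matrix.sub_apply, toBlock_apply, hij, zero_sub, neg_eq_zero]
  rcases h with hrow | hcol
  · rw [Matrix.mul_assoc, mul_apply]
    exact Finset.sum_eq_zero fun d _ => by rw [toBlock_apply, hrow d d.2, zero_mul]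
  · rw [mul_apply]
    exact Finset.sum_eq_zero fun d _ => by rw [toBlock_apply, hcol d d.2, mul_zero]

theorem stmt_4_general (hK : IsUnit K) (hp : IsUnit (K.toBlock (¬p ·) (¬p ·)))
    {i j : {a // p a}} (hij : K i j = 0)
    (h : (∀ d, ¬p d → K i d = 0) ∨ ∀ d, ¬p d → K d j = 0) :
    (K⁻¹.toBlock p p)⁻¹ i j = 0 := by
  rw [inv_toBlock_inv_eq_schurComplement hK hp, schurComplement_apply_eq_zero hij h]

end SchurComplement

theorem stmt_4 {Δ : Type*} [Fintype Δ] [DecidableEq Δ]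
    (K : Matrix Δ Δ ℝ) (hsymm : K.IsSymm) (hK : K.PosDef)
    (δ : Δ) (Q1 : Finset Δ) (hQ1 : Q1 = Finset.univ.erase δ)
    (i j : Δ) (hi : i ∈ Q1) (hj : j ∈ Q1)
    (hij : K i j = 0) (hδ : K i δ = 0 ∨ K j δ = 0) :
    ((msub K⁻¹ Q1 Q1)⁻¹) ⟨i, hi⟩ ⟨j, hj⟩ = 0 := by
  have hcross : (∀ d, d ∉ Q1 → K i d = 0) ∨ ∀ d, d ∉ Q1 → K d j = 0 := by
    simpa [hQ1, hsymm.apply j δ] using hδ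
  rw [show msub K⁻¹ Q1 Q1 = K⁻¹.toBlock (· ∈ Q1) (· ∈ Q1) from rfl]
  -- `convert` reconciles the two `Fintype` instances on `Q1`: as a finset and as a subtype of `Δ`.
  convert stmt_4_general (p := (· ∈ Q1)) (i := ⟨i, hi⟩) (j := ⟨j, hj⟩) hK.isUnit
    (hK.submatrix Subtype.val_injective).isUnit hij hcross
end

section
/- Let K be a symmetric positive definite real matrix indexed by a finite set Δ, and let C ⊆ Q1 ⊆ Δ with C nonempty. Set M := ((K^{-1})_{Q1Q1})^{-1}, which is a symmetric positive definite matrix indexed by Q1. Then ((M^{-1})_{CC})^{-1} = ((K^{-1})_{CC})^{-1}; that is, taking the inverse of the C-marginal of the inverse can be computed in two stages through any intermediate index set Q1. -/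
open Matrix

section MarginalPrecision

variable {𝕜 m n p : Type*} [Fintype m] [Fintype n] [Fintype p]
  [DecidableEq m] [DecidableEq n] [DecidableEq p]

/-- The marginal precision matrix `((K⁻¹)_{nn})⁻¹` of a precision matrix `K` indexed by `m`, where
`n` is viewed as a subset of `m` through the embedding `f`. Either inverse
is `0` when the matrix it is applied to is singular. -/
noncomputable def marginalPrecision [CommRing 𝕜] (f : n ↪ m) (K : Matrix m m 𝕜) : Matrix n n 𝕜 :=
  (K⁻¹.submatrix f f)⁻¹

theorem inv_marginalPrecision [CommRing 𝕜] {f : n ↪ m} {K : Matrix m m 𝕜}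
    (h : IsUnit (K⁻¹.submatrix f f)) : (marginalPrecision f K)⁻¹ = K⁻¹.submatrix f f :=
  nonsing_inv_nonsing_inv _ ((isUnit_iff_isUnit_det _).mp h)

theorem marginalPrecision_marginalPrecision [CommRing 𝕜] {f : n ↪ m} {K : Matrix m m 𝕜}
    (h : IsUnit (K⁻¹.submatrix f f)) (g : p ↪ n) :
    marginalPrecision g (marginalPrecision f K) = marginalPrecision (g.trans f) K :=
  calc marginalPrecision g (marginalPrecision f K)
      = ((K⁻¹.submatrix f f).submatrix g g)⁻¹ := by
        rw [marginalPrecision, inv_marginalPrecision h]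
    _ = marginalPrecision (g.trans f) K := by
        rw [submatrix_submatrix, marginalPrecision, Function.Embedding.coe_trans]

variable [Field 𝕜] [PartialOrder 𝕜] [StarRing 𝕜] {K : Matrix m m 𝕜}

theorem posDef_marginalPrecision (hK : K.PosDef) (f : n ↪ m) : (marginalPrecision f K).PosDef :=
  (hK.inv.submatrix f.injective).inv

theorem stmt_5_general (hK : K.PosDef) (f : n ↪ m) (g : p ↪ n) :
    (marginalPrecision f K).PosDef ∧
      marginalPrecision g (marginalPrecision f K) = marginalPrecision (g.trans f) K :=
  ⟨posDef_marginalPrecision hK f,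
    marginalPrecision_marginalPrecision (hK.inv.submatrix f.injective).isUnit g⟩

end MarginalPrecision

theorem stmt_5 {Δ : Type*} [Fintype Δ] [DecidableEq Δ]
    (K : Matrix Δ Δ ℝ) (hsymm : K.IsSymm) (hK : K.PosDef)
    (C Q1 : Finset Δ) (hCQ : C ⊆ Q1) (hC : C.Nonempty)
    (M : Matrix Q1 Q1 ℝ) (hM : M = (msub K⁻¹ Q1 Q1)⁻¹) :
    M.IsSymm ∧ M.PosDef ∧
    ((M⁻¹).submatrix (fun i : C => (⟨↑i, hCQ i.2⟩ : Q1)) (fun j : C => (⟨↑j, hCQ j.2⟩ : Q1)))⁻¹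
      = (msub K⁻¹ C C)⁻¹ := by
  subst hM
  obtain ⟨hpos, hcomp⟩ := stmt_5_general hK (.subtype (· ∈ Q1)) (Subtype.impEmbedding _ _ hCQ)
  exact ⟨isHermitian_iff_isSymm.mp hpos.isHermitian, hpos, hcomp⟩
end

section
/- Let K be a symmetric positive definite real matrix indexed by a finite set Δ, let C be a nonempty proper subset of Δ, and let δ_1, …, δ_p be any enumeration of Δ \ C. Define a sequence of matrices by K^{(0)} := K and, for l = 1, …, p, K^{(l)} := (K^{(l-1)})_{Q_l Q_l} − ((K^{(l-1)})_{δ_l δ_l})^{-1} (K^{(l-1)})_{Q_l δ_l} (K^{(l-1)})_{δ_l Q_l}, where Q_l is the index set of K^{(l-1)} with δ_l removed. Then each K^{(l)} is symmetric positive definite and the final matrix satisfies K^{(p)} = ((K^{-1})_{CC})^{-1}. (This is the correctness of the localized elimination algorithm: successive single-vertex Schur-complement eliminations of all vertices outside C, in any order, produce the inverse of the C-marginal of K^{-1}.) -/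
open Matrix

/-!
Let `S = K⁻¹`. If `A = (S_{QQ})⁻¹`, then subtracting from `A` the rank-one matrix
`(A d d)⁻¹ A_{·d} A_{d·}` makes its column `d` vanish, and changes the product with `S_{QQ}` only in
column `d`, because `A_{d·} S_{QQ}` is the `d`-th unit vector. Deleting the index `d` therefore
leaves `(S_{PP})⁻¹` with `P = Q \ {d}`. By induction every matrix of the sequence is
`(S_{QQ})⁻¹` for the current index set `Q`, and so inherits positive definiteness from `S`.
-/

section Submatrix

variable {k l m n o q R : Type*} [Fintype m] [Fintype n] [NonUnitalNonAssocSemiring R]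

theorem submatrix_mul_submatrix_of_col_eq_zero {f : m → n} (hf : Function.Injective f)
    {A : Matrix l n R} (hA : ∀ j ∉ Set.range f, A.col j = 0) (B : Matrix n o R)
    (e : k → l) (g : q → o) :
    A.submatrix e f * B.submatrix f g = (A * B).submatrix e g := by
  ext i j
  refine Fintype.sum_of_injective f hf _ (fun x => A (e i) x * B x (g j)) (fun x hx => ?_)
    fun _ => rfl
  have hzero : A (e i) x = 0 := congrFun (hA x hx) (e i)
  simp only [hzero, zero_mul]

end Submatrix

section Elimination

variable {m n F : Type*} [Field F]

/-- Elimination of the vertex `d` from `A`, kept at full size: row and column `d` are cleared by a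
rank-one correction, and restricting to the indices other than `d` gives the Schur complement of
the entry `A d d`. It is meaningful only for `A d d ≠ 0`, since `0⁻¹ = 0`. -/
def eliminateVertex (A : Matrix n n F) (d : n) : Matrix n n F :=
  A - (A d d)⁻¹ • vecMulVec (A.col d) (A.row d)

theorem eliminateVertex_apply (A : Matrix n n F) (d i j : n) :
    eliminateVertex A d i j = A i j - (A d d)⁻¹ * (A i d * A d j) :=
  rfl

theorem eliminateVertex_col_self {A : Matrix n n F} {d : n} (hd : A d d ≠ 0) :
    (eliminateVertex A d).col d = 0 := by
  ext i
  rw [col_apply, eliminateVertex_apply, mul_comm (A i d), inv_mul_cancel_left₀ hd, sub_self,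
    Pi.zero_apply]

variable [Fintype n] [DecidableEq n]

theorem eliminateVertex_mul_of_mul_eq_one {A S : Matrix n n F} (hAS : A * S = 1) (d : n) :
    eliminateVertex A d * S = 1 - (A d d)⁻¹ • vecMulVec (A.col d) (Pi.single d 1) := by
  have hrow : A.row d ᵥ* S = Pi.single d 1 := by
    rw [← single_one_vecMul, vecMul_vecMul, hAS, vecMul_one]
  rw [eliminateVertex, sub_mul, smul_mul_assoc, vecMulVec_mul, hAS, hrow]

variable [Fintype m] [DecidableEq m]

theorem submatrix_eliminateVertex_mul_submatrix {A S : Matrix n n F} (hAS : A * S = 1) {d : n}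
    (hd : A d d ≠ 0) {f : m → n} (hf : Function.Injective f) (hrange : Set.range f = {d}ᶜ) :
    (eliminateVertex A d).submatrix f f * S.submatrix f f = 1 := by
  have hcol : ∀ j ∉ Set.range f, (eliminateVertex A d).col j = 0 := by
    intro j hj
    obtain rfl : j = d := by simpa [hrange] using hj
    exact eliminateVertex_col_self hd
  have hne : ∀ k, f k ≠ d := fun k => by
    simpa [hrange] using Set.mem_range_self (f := f) k
  rw [submatrix_mul_submatrix_of_col_eq_zero hf hcol, eliminateVertex_mul_of_mul_eq_one hAS]
  ext i k
  simp [vecMulVec_apply, Pi.single_eq_of_ne (hne k), one_apply, hf.eq_iff]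

theorem submatrix_eliminateVertex_inv {S : Matrix n n F} (hS : IsUnit S) {d : n}
    (hd : S⁻¹ d d ≠ 0) {f : m → n} (hf : Function.Injective f) (hrange : Set.range f = {d}ᶜ) :
    (eliminateVertex S⁻¹ d).submatrix f f = (S.submatrix f f)⁻¹ :=
  (inv_eq_left_inv <| submatrix_eliminateVertex_mul_submatrix
    (nonsing_inv_mul S ((isUnit_iff_isUnit_det S).mp hS)) hd hf hrange).symm

end Elimination

section ErasedSets

variable {α : Type*} [DecidableEq α] {p : ℕ} {δ : Fin p → α} {Q : Fin (p + 1) → Finset α}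

theorem mem_iff_of_succ_eq_erase (hQ : ∀ l : Fin p, Q l.succ = (Q l.castSucc).erase (δ l))
    (l : Fin (p + 1)) (x : α) :
    x ∈ Q l ↔ x ∈ Q 0 ∧ ∀ i : Fin p, i.castSucc < l → x ≠ δ i := by
  induction l using Fin.induction with
  | zero => simp
  | succ l ih =>
    simp only [hQ, Finset.mem_erase, ih, Fin.castSucc_lt_succ_iff, Fin.castSucc_lt_castSucc_iff,
      le_iff_lt_or_eq, or_imp, forall_and, forall_eq]
    tauto

theorem mem_castSucc_of_succ_eq_erase
    (hQ : ∀ l : Fin p, Q l.succ = (Q l.castSucc).erase (δ l))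
    (hδ : Function.Injective δ) (l : Fin p) (hl : δ l ∈ Q 0) : δ l ∈ Q l.castSucc :=
  (mem_iff_of_succ_eq_erase hQ _ _).mpr
    ⟨hl, fun _ hi => hδ.ne (Fin.castSucc_lt_castSucc_iff.mp hi).ne'⟩

theorem last_eq_sdiff_image_of_succ_eq_erase
    (hQ : ∀ l : Fin p, Q l.succ = (Q l.castSucc).erase (δ l)) :
    Q (Fin.last p) = Q 0 \ Finset.univ.image δ := by
  ext x
  simp [mem_iff_of_succ_eq_erase hQ (Fin.last p) x, Fin.castSucc_lt_last, eq_comm]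

end ErasedSets

section PosDef

variable {Δ F : Type*} [DecidableEq Δ] [Field F] [PartialOrder F] [StarRing F]

theorem eq_inv_submatrix_erase_of_eliminateVertex {S : Matrix Δ Δ F} (hS : S.PosDef)
    {P Q : Finset Δ} {d : Δ} (hd : d ∈ Q) (hP : P = Q.erase d)
    {A : Matrix Q Q F} (hA : A = (S.submatrix (↑) (↑))⁻¹) {B : Matrix P P F}
    (hB : ∀ (i j : P) (hi : ↑i ∈ Q) (hj : ↑j ∈ Q),
      B i j = eliminateVertex A ⟨d, hd⟩ ⟨i, hi⟩ ⟨j, hj⟩) :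
    B = (S.submatrix (↑) (↑))⁻¹ := by
  have hPQ : P ⊆ Q := hP ▸ Finset.erase_subset d Q
  have hSQ : (S.submatrix ((↑) : Q → Δ) (↑)).PosDef := hS.submatrix Subtype.val_injective
  have hrange : Set.range (Set.inclusion hPQ) = {(⟨d, hd⟩ : Q)}ᶜ := by
    ext x
    simp [hP, Subtype.ext_iff]
  calc B = (eliminateVertex A ⟨d, hd⟩).submatrix (Set.inclusion hPQ) (Set.inclusion hPQ) :=
        Matrix.ext fun i j => hB i j (hPQ i.2) (hPQ j.2)
    _ = ((S.submatrix ((↑) : Q → Δ) (↑)).submatrix (Set.inclusion hPQ) (Set.inclusion hPQ))⁻¹ := by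
        rw [hA]
        exact submatrix_eliminateVertex_inv hSQ.isUnit hSQ.inv.diag_pos.ne'
          (Set.inclusion_injective hPQ) hrange

variable [Fintype Δ]

theorem eliminationSeq_eq_inv_submatrix_inv {K : Matrix Δ Δ F} (hK : K.PosDef)
    {p : ℕ} {δ : Fin p → Δ} (hinj : Function.Injective δ) {Q : Fin (p + 1) → Finset Δ}
    (hQ0 : Q 0 = Finset.univ)
    (hQsucc : ∀ l : Fin p, Q l.succ = (Q l.castSucc).erase (δ l))
    {Kseq : ∀ l : Fin (p + 1), Matrix (Q l) (Q l) F}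
    (hK0 : ∀ i j : Q 0, Kseq 0 i j = K i j)
    (hstep : ∀ (l : Fin p) (i j : Q l.succ)
      (hi : ↑i ∈ Q l.castSucc) (hj : ↑j ∈ Q l.castSucc) (hd : δ l ∈ Q l.castSucc),
      Kseq l.succ i j = eliminateVertex (Kseq l.castSucc) ⟨δ l, hd⟩ ⟨i, hi⟩ ⟨j, hj⟩)
    (l : Fin (p + 1)) :
    Kseq l = (K⁻¹.submatrix (↑) (↑))⁻¹ := by
  induction l using Fin.induction with
  | zero =>
    let e : Q 0 ≃ Δ := Equiv.subtypeUnivEquiv fun x => hQ0 ▸ Finset.mem_univ x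
    calc Kseq 0 = K.submatrix e e := Matrix.ext hK0
      _ = (K⁻¹.submatrix e e)⁻¹ := by
        rw [inv_submatrix_equiv, nonsing_inv_nonsing_inv K ((isUnit_iff_isUnit_det K).mp hK.isUnit)]
  | succ l ih =>
    have hd : δ l ∈ Q l.castSucc :=
      mem_castSucc_of_succ_eq_erase hQsucc hinj l (hQ0 ▸ Finset.mem_univ _)
    exact eq_inv_submatrix_erase_of_eliminateVertex hK.inv hd (hQsucc l) ih
      fun i j hi hj => hstep l i j hi hj hd

theorem stmt_6_general {K : Matrix Δ Δ F} (hK : K.PosDef) {C : Finset Δ}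
    {p : ℕ} {δ : Fin p → Δ} (hinj : Function.Injective δ)
    (himg : Finset.image δ Finset.univ = Finset.univ \ C)
    {Q : Fin (p + 1) → Finset Δ} (hQ0 : Q 0 = Finset.univ)
    (hQsucc : ∀ l : Fin p, Q l.succ = (Q l.castSucc).erase (δ l))
    {Kseq : ∀ l : Fin (p + 1), Matrix (Q l) (Q l) F}
    (hK0 : ∀ i j : Q 0, Kseq 0 i j = K i j)
    (hstep : ∀ (l : Fin p) (i j : Q l.succ)
      (hi : ↑i ∈ Q l.castSucc) (hj : ↑j ∈ Q l.castSucc) (hd : δ l ∈ Q l.castSucc),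
      Kseq l.succ i j =
        Kseq l.castSucc ⟨i, hi⟩ ⟨j, hj⟩ -
          (Kseq l.castSucc ⟨δ l, hd⟩ ⟨δ l, hd⟩)⁻¹ *
            (Kseq l.castSucc ⟨i, hi⟩ ⟨δ l, hd⟩ * Kseq l.castSucc ⟨δ l, hd⟩ ⟨j, hj⟩)) :
    (∀ l : Fin (p + 1), (Kseq l).PosDef) ∧
    Q (Fin.last p) = C ∧
    (∀ (i j : Q (Fin.last p)) (hi : ↑i ∈ C) (hj : ↑j ∈ C),
      Kseq (Fin.last p) i j =
        (K⁻¹.submatrix ((↑) : C → Δ) ((↑) : C → Δ))⁻¹ ⟨i, hi⟩ ⟨j, hj⟩) := by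
  have hinv := eliminationSeq_eq_inv_submatrix_inv hK hinj hQ0 hQsucc hK0 hstep
  have hlast : Q (Fin.last p) = C := by
    rw [last_eq_sdiff_image_of_succ_eq_erase hQsucc, hQ0, himg,
      Finset.sdiff_sdiff_eq_self (Finset.subset_univ C)]
  refine ⟨fun l => ?_, hlast, fun i j hi hj => ?_⟩
  · rw [hinv l]
    exact (hK.inv.submatrix Subtype.val_injective).inv
  · rw [hinv (Fin.last p)]
    subst hlast
    rfl

end PosDef

/-- Correctness of the localized elimination algorithm: successively eliminating,
by single-vertex Schur complements, all vertices outside `C` (in any order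
`δ 0, …, δ (p-1)` enumerating `Δ \ C`) from a symmetric positive definite matrix `K`
keeps every intermediate matrix symmetric positive definite and finally produces
`((K⁻¹)_{CC})⁻¹`. -/
theorem stmt_6 {Δ : Type*} [Fintype Δ] [DecidableEq Δ]
    (K : Matrix Δ Δ ℝ) (hsymm : K.IsSymm) (hK : K.PosDef)
    (C : Finset Δ) (hC : C.Nonempty) (hCproper : C ≠ Finset.univ)
    (p : ℕ) (δ : Fin p → Δ) (hinj : Function.Injective δ)
    (himg : Finset.image δ Finset.univ = Finset.univ \ C)
    -- the shrinking index sets `Q 0 = Δ`, `Q (l+1) = Q l \ {δ l}`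
    (Q : Fin (p + 1) → Finset Δ)
    (hQ0 : Q 0 = Finset.univ)
    (hQsucc : ∀ l : Fin p, Q l.succ = (Q l.castSucc).erase (δ l))
    -- the sequence of matrices `Kseq 0 = K`, each `Kseq (l+1)` being the
    -- single-vertex Schur-complement elimination of `δ l` from `Kseq l`
    (Kseq : ∀ l : Fin (p + 1), Matrix (Q l) (Q l) ℝ)
    (hK0 : ∀ i j : Q 0, Kseq 0 i j = K ↑i ↑j)
    (hstep : ∀ (l : Fin p) (i j : Q l.succ)
      (hi : ↑i ∈ Q l.castSucc) (hj : ↑j ∈ Q l.castSucc) (hd : δ l ∈ Q l.castSucc),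
      Kseq l.succ i j =
        Kseq l.castSucc ⟨↑i, hi⟩ ⟨↑j, hj⟩ -
          (Kseq l.castSucc ⟨δ l, hd⟩ ⟨δ l, hd⟩)⁻¹ *
            (Kseq l.castSucc ⟨↑i, hi⟩ ⟨δ l, hd⟩ * Kseq l.castSucc ⟨δ l, hd⟩ ⟨↑j, hj⟩)) :
    (∀ l : Fin (p + 1), (Kseq l).IsSymm ∧ (Kseq l).PosDef) ∧
    Q (Fin.last p) = C ∧
    (∀ (i j : Q (Fin.last p)) (hi : ↑i ∈ C) (hj : ↑j ∈ C),
      Kseq (Fin.last p) i j = ((msub K⁻¹ C C)⁻¹) ⟨↑i, hi⟩ ⟨↑j, hj⟩) := by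
  obtain ⟨hpos, hlast, hfinal⟩ := stmt_6_general hK hinj himg hQ0 hQsucc hK0 hstep
  exact ⟨fun l => ⟨isHermitian_iff_isSymm.mp (hpos l).isHermitian, hpos l⟩, hlast, hfinal⟩
end

section
/- Let Δ be a finite index set partitioned into disjoint nonempty subsets C and D, let K be a symmetric positive definite real matrix indexed by Δ, and let W_{CC} be a symmetric positive definite matrix indexed by C. Define K' to be the symmetric matrix indexed by Δ with blocks (K')_{CC} = (W_{CC})^{-1} + K_{CD} (K_{DD})^{-1} K_{DC}, (K')_{CD} = K_{CD}, (K')_{DC} = K_{DC}, and (K')_{DD} = K_{DD}. Then K' is positive definite and ((K')^{-1})_{CC} = W_{CC}; that is, one step of the iterative proportional scaling update adjusts the C-marginal of the inverse to equal W_{CC}. -/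
open Matrix

/-!
In block form `K' = [[W⁻¹ + B D⁻¹ Bᴴ, B], [Bᴴ, D]]` with `B = K_{CD}` and `D = K_{DD}`, so the
update is chosen to make the Schur complement of `D` in `K'` equal to `W⁻¹`. Since `D` is positive
definite, `K'` is positive definite iff this Schur complement is, and the `CC` block of the inverse
of `K'` is the inverse of the Schur complement, namely `W`.
-/

section SchurComplement

variable {m n : Type*} [Fintype n] [DecidableEq n]

theorem isUnit_fromBlocks_iff_of_isUnit₂₂ [Fintype m] [DecidableEq m] {R : Type*} [CommRing R]
    {A : Matrix m m R} {B : Matrix m n R} {C : Matrix n m R} {D : Matrix n n R} (hD : IsUnit D) :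
    IsUnit (fromBlocks A B C D) ↔ IsUnit (A - B * D⁻¹ * C) := by
  let := hD.invertible
  rw [isUnit_fromBlocks_iff_of_invertible₂₂, invOf_eq_nonsing_inv]

theorem toBlocks₁₁_inv_fromBlocks [Fintype m] [DecidableEq m] {R : Type*} [CommRing R]
    {A : Matrix m m R} {B : Matrix m n R} {C : Matrix n m R} {D : Matrix n n R} (hD : IsUnit D)
    (hSchur : IsUnit (A - B * D⁻¹ * C)) :
    (fromBlocks A B C D)⁻¹.toBlocks₁₁ = (A - B * D⁻¹ * C)⁻¹ := by
  let := ((isUnit_fromBlocks_iff_of_isUnit₂₂ hD).2 hSchur).invertible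
  let := hD.invertible
  rw [← invOf_eq_nonsing_inv D] at hSchur ⊢
  let := hSchur.invertible
  rw [← invOf_eq_nonsing_inv, invOf_fromBlocks₂₂_eq, toBlocks_fromBlocks₁₁,
    invOf_eq_nonsing_inv (A - B * ⅟D * C)]

open scoped ComplexOrder in
theorem posDef_fromBlocks_iff_of_posDef₂₂ [Finite m] {𝕜 : Type*} [RCLike 𝕜]
    {A : Matrix m m 𝕜} {B : Matrix m n 𝕜} {D : Matrix n n 𝕜} (hD : D.PosDef) :
    (fromBlocks A B Bᴴ D).PosDef ↔ (A - B * D⁻¹ * Bᴴ).PosDef := by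
  classical
  let := Fintype.ofFinite m
  let := hD.isUnit.invertible
  have posSemidef_iff := PosDef.fromBlocks₂₂ A B hD
  have isUnit_iff := isUnit_fromBlocks_iff_of_isUnit₂₂ (A := A) (B := B) (C := Bᴴ) hD.isUnit
  constructor
  · intro h
    exact (posSemidef_iff.1 h.posSemidef).posDef_iff_isUnit.2 (isUnit_iff.1 h.isUnit)
  · intro h
    exact (posSemidef_iff.2 h.posSemidef).posDef_iff_isUnit.2 (isUnit_iff.2 h.isUnit)

end SchurComplement

theorem posDef_submatrix_equiv_iff {m n R : Type*} [Ring R] [PartialOrder R] [StarRing R]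
    {M : Matrix n n R} (e : m ≃ n) : (M.submatrix e e).PosDef ↔ M.PosDef :=
  ⟨fun h => by simpa using h.submatrix e.symm.injective, fun h => h.submatrix e.injective⟩

/-- The equivalence `s ⊕ t ≃ α` given by the inclusions of complementary finsets `s` and `t`; it
reindexes a matrix on `α` as a block matrix. -/
def sumEquivOfIsCompl {α : Type*} [Fintype α] [DecidableEq α] {s t : Finset α}
    (h : IsCompl s t) : s ⊕ t ≃ α :=
  (Equiv.Finset.union s t h.disjoint).trans <|
    Equiv.subtypeUnivEquiv fun x => h.sup_eq_top.ge (Finset.mem_univ x)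

theorem submatrix_sumEquivOfIsCompl {α R : Type*} [Fintype α] [DecidableEq α] {s t : Finset α}
    (h : IsCompl s t) (M : Matrix α α R) :
    M.submatrix (sumEquivOfIsCompl h) (sumEquivOfIsCompl h) =
      fromBlocks (M.submatrix (↑) (↑)) (M.submatrix (↑) (↑))
        (M.submatrix (↑) (↑)) (M.submatrix (↑) (↑)) := by
  ext (i | i) (j | j) <;> rfl

open scoped ComplexOrder in
theorem stmt_7_general {𝕜 Δ : Type*} [RCLike 𝕜] [Fintype Δ] [DecidableEq Δ] {C D : Finset Δ}
    (hCD : IsCompl C D) {K : Matrix Δ Δ 𝕜} (hK : K.IsHermitian)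
    (hKDD : (K.submatrix ((↑) : D → Δ) ((↑) : D → Δ)).PosDef)
    {W : Matrix C C 𝕜} (hW : W.PosDef) {K' : Matrix Δ Δ 𝕜}
    (hCC : K'.submatrix ((↑) : C → Δ) ((↑) : C → Δ) =
      W⁻¹ + K.submatrix ((↑) : C → Δ) ((↑) : D → Δ) *
        (K.submatrix ((↑) : D → Δ) ((↑) : D → Δ))⁻¹ * K.submatrix ((↑) : D → Δ) ((↑) : C → Δ))
    (hout : ∀ i j : Δ, ¬(i ∈ C ∧ j ∈ C) → K' i j = K i j) :
    K'.PosDef ∧ K'⁻¹.submatrix ((↑) : C → Δ) ((↑) : C → Δ) = W := by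
  set KCD := K.submatrix ((↑) : C → Δ) ((↑) : D → Δ)
  set KDD := K.submatrix ((↑) : D → Δ) ((↑) : D → Δ)
  let e := sumEquivOfIsCompl hCD
  have notMem_C (j : D) : (j : Δ) ∉ C := Finset.disjoint_right.1 hCD.disjoint j.2
  have hKDC : K.submatrix ((↑) : D → Δ) ((↑) : C → Δ) = KCDᴴ := by
    rw [conjTranspose_submatrix, hK.eq]
  have hblocks : K'.submatrix e e = fromBlocks (W⁻¹ + KCD * KDD⁻¹ * KCDᴴ) KCD KCDᴴ KDD := by
    rw [← hKDC, ← hCC, submatrix_sumEquivOfIsCompl]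
    congr 1 <;> ext i j
    · exact hout i j fun h => notMem_C j h.2
    · exact hout i j fun h => notMem_C i h.1
    · exact hout i j fun h => notMem_C i h.1
  have hSchur : W⁻¹ + KCD * KDD⁻¹ * KCDᴴ - KCD * KDD⁻¹ * KCDᴴ = W⁻¹ := add_sub_cancel_right _ _
  have hWinv : IsUnit W⁻¹ := hW.inv.isUnit
  constructor
  · rw [← posDef_submatrix_equiv_iff e, hblocks, posDef_fromBlocks_iff_of_posDef₂₂ hKDD, hSchur]
    exact hW.inv
  · calc K'⁻¹.submatrix ((↑) : C → Δ) ((↑) : C → Δ)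
      _ = (K'.submatrix e e)⁻¹.toBlocks₁₁ := by
        rw [inv_submatrix_equiv, submatrix_sumEquivOfIsCompl, toBlocks_fromBlocks₁₁]
      _ = W⁻¹⁻¹ := by
        rw [hblocks, toBlocks₁₁_inv_fromBlocks hKDD.isUnit (by rwa [hSchur]), hSchur]
      _ = W := nonsing_inv_nonsing_inv W ((isUnit_iff_isUnit_det W).1 hW.isUnit)

/-- One step of the iterative proportional scaling update adjusts the `C`-marginal
of the inverse to equal `W_{CC}` and keeps the matrix positive definite. -/
theorem stmt_7 {Δ : Type*} [Fintype Δ] [DecidableEq Δ]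
    (C D : Finset Δ) (hdisj : Disjoint C D) (hunion : C ∪ D = Finset.univ)
    (hC : C.Nonempty) (hD : D.Nonempty)
    (K : Matrix Δ Δ ℝ) (hsymm : K.IsSymm) (hK : K.PosDef)
    (W : Matrix C C ℝ) (hWsymm : W.IsSymm) (hW : W.PosDef)
    (K' : Matrix Δ Δ ℝ) (hK'symm : K'.IsSymm)
    (hCC : ∀ i j : C, K' ↑i ↑j = (W⁻¹ + msub K C D * (msub K D D)⁻¹ * msub K D C) i j)
    (hout : ∀ i j : Δ, ¬(i ∈ C ∧ j ∈ C) → K' i j = K i j) :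
    K'.PosDef ∧ msub K'⁻¹ C C = W := by
  exact stmt_7_general ⟨hdisj, codisjoint_iff.2 hunion⟩ hK.isHermitian
    (hK.submatrix Subtype.val_injective) hW (Matrix.ext hCC) hout
end

section
/- Let Δ be a finite index set partitioned into disjoint nonempty subsets A, B, and S, and let K be a symmetric positive definite real matrix indexed by Δ with K_{AB} = 0. Set V := A ∪ S and V' := B ∪ S. Then K decomposes as K = [((K^{-1})_{VV})^{-1}]^Δ + [((K^{-1})_{V'V'})^{-1}]^Δ − [((K^{-1})_{SS})^{-1}]^Δ; that is, K is the sum of the inverses of the V- and V'-marginals of K^{-1}, padded with zeros, minus the zero-padded inverse of the S-marginal of K^{-1}. -/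
open Matrix

/-- `[M]^Δ`: the `Δ × Δ` matrix obtained by padding a `V × V` matrix `M` with zeros. -/
def pad {Δ : Type*} (V : Finset Δ) [DecidablePred (· ∈ V)] (M : Matrix V V ℝ) :
    Matrix Δ Δ ℝ :=
  Matrix.of fun i j => if h : i ∈ V ∧ j ∈ V then M ⟨i, h.1⟩ ⟨j, h.2⟩ else 0

/-!
Call `y` an inverse of `x` in the corner of `p` if `y = p * y = y * p` and
`y * x * p = p = p * x * y`. Three facts about a unit `k` of a ring give the decomposition.
* If `y` is a corner inverse of `k` at `p`, then `k - k * y * k` is a corner inverse of `k⁻¹` at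
  `1 - p`; for matrices this is the Schur complement formula.
* Corner inverses at orthogonal `p`, `q` with `p * k * q = q * k * p = 0` add up.
* If `p` projects onto the coordinates in `V`, a corner inverse of `N` at `p` is the zero-padded
  inverse of `N_{VV}`.

With `g_A`, `g_B` the zero-padded inverses of `K_{AA}`, `K_{BB}`, the three terms on the right are
therefore `K - K g_B K`, `K - K g_A K` and `K - K (g_A + g_B) K`.
-/

/-- `y` is the inverse of `p * x * p` in the corner ring `p R p`. The equations force `p` to be
idempotent; `x` itself need not lie in the corner. -/
structure IsCornerInverse {R : Type*} [Semigroup R] (p x y : R) : Prop where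
  proj_mul : p * y = y
  mul_proj : y * p = y
  inv_mul : y * x * p = p
  mul_inv : p * x * y = p

namespace IsCornerInverse

theorem one_sub {R : Type*} [Ring R] {p k l y : R} (hy : IsCornerInverse p k y)
    (hkl : k * l = 1) (hlk : l * k = 1) : IsCornerInverse (1 - p) l (k - k * y * k) where
  proj_mul := by
    have : p * (k * y * k) = p * k := by rw [← mul_assoc, ← mul_assoc, hy.mul_inv]
    rw [sub_mul, one_mul, mul_sub, this, sub_self, sub_zero]
  mul_proj := by
    have : k * y * k * p = k * p := by rw [mul_assoc, mul_assoc, ← mul_assoc y, hy.inv_mul]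
    rw [mul_sub, mul_one, sub_mul, this, sub_self, sub_zero]
  inv_mul := by
    have : k * y * (1 - p) = 0 := by
      rw [mul_assoc, mul_sub, mul_one, hy.mul_proj, sub_self, mul_zero]
    rw [sub_mul k, mul_assoc (k * y), hkl, mul_one, sub_mul 1 (k * y), one_mul, this, sub_zero]
  mul_inv := by
    have : (1 - p) * (y * k) = 0 := by
      rw [← mul_assoc, sub_mul, one_mul, hy.proj_mul, sub_self, zero_mul]
    rw [mul_assoc, mul_sub l, mul_assoc k, ← mul_assoc l, hlk, one_mul, mul_sub, mul_one, this,
      sub_zero]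

theorem add {R : Type*} [Semiring R] {p q x y z : R}
    (hy : IsCornerInverse p x y) (hz : IsCornerInverse q x z)
    (hpq : p * q = 0) (hqp : q * p = 0) (hpxq : p * x * q = 0) (hqxp : q * x * p = 0) :
    IsCornerInverse (p + q) x (y + z) where
  proj_mul := by
    have hpz : p * z = 0 := by rw [← hz.proj_mul, ← mul_assoc, hpq, zero_mul]
    have hqy : q * y = 0 := by rw [← hy.proj_mul, ← mul_assoc, hqp, zero_mul]
    rw [add_mul, mul_add, mul_add, hy.proj_mul, hz.proj_mul, hpz, hqy, add_zero, zero_add]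
  mul_proj := by
    have hyq : y * q = 0 := by rw [← hy.mul_proj, mul_assoc, hpq, mul_zero]
    have hzp : z * p = 0 := by rw [← hz.mul_proj, mul_assoc, hqp, mul_zero]
    rw [add_mul, mul_add, mul_add, hy.mul_proj, hz.mul_proj, hyq, hzp, add_zero, zero_add]
  inv_mul := by
    have hyxq : y * x * q = 0 := by
      rw [← hy.mul_proj, mul_assoc, mul_assoc, ← mul_assoc p, hpxq, mul_zero]
    have hzxp : z * x * p = 0 := by
      rw [← hz.mul_proj, mul_assoc, mul_assoc, ← mul_assoc q, hqxp, mul_zero]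
    rw [add_mul, add_mul, mul_add, mul_add, hy.inv_mul, hz.inv_mul, hyxq, hzxp, add_zero, zero_add]
  mul_inv := by
    have hpxz : p * x * z = 0 := by rw [← hz.proj_mul, ← mul_assoc, hpxq, zero_mul]
    have hqxy : q * x * y = 0 := by rw [← hy.proj_mul, ← mul_assoc, hqxp, zero_mul]
    rw [add_mul, add_mul, mul_add, mul_add, hy.mul_inv, hz.mul_inv, hpxz, hqxy, add_zero, zero_add]

end IsCornerInverse

/-- The submatrix `A_{VW}`; `msub` with entries of any type. -/
abbrev block {Δ R : Type*} (A : Matrix Δ Δ R) (V W : Finset Δ) : Matrix V W R :=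
  A.submatrix (fun i => (i : Δ)) (fun j => (j : Δ))

/-- The zero-padding `[M]^Δ`; `pad` with entries of any type with a zero. -/
def zeroPad {Δ R : Type*} [Zero R] (V : Finset Δ) [DecidablePred (· ∈ V)] (M : Matrix V V R) :
    Matrix Δ Δ R :=
  Matrix.of fun i j => if h : i ∈ V ∧ j ∈ V then M ⟨i, h.1⟩ ⟨j, h.2⟩ else 0

/-- The matrix of the projection onto the coordinates in `V`, the idempotent whose corner consists
of the matrices supported on `V × V`. -/
def coordProj {Δ : Type*} [DecidableEq Δ] (R : Type*) [Zero R] [One R] (V : Finset Δ) :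
    Matrix Δ Δ R :=
  Matrix.diagonal fun i => if i ∈ V then 1 else 0

section ZeroPad

variable {Δ R : Type*} [DecidableEq Δ]

theorem block_zeroPad [Zero R] (V : Finset Δ) (M : Matrix V V R) :
    block (zeroPad V M) V V = M := by
  ext i j
  simp [zeroPad]

theorem zeroPad_one [Zero R] [One R] (V : Finset Δ) :
    zeroPad V (1 : Matrix V V R) = coordProj R V := by
  ext i j
  rcases eq_or_ne i j with rfl | hij
  · by_cases hi : i ∈ V <;> simp [zeroPad, coordProj, hi]
  · simp [zeroPad, coordProj, Matrix.one_apply, hij]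

theorem coordProj_union [AddZeroClass R] [One R] {V W : Finset Δ} (h : Disjoint V W) :
    coordProj R (V ∪ W) = coordProj R V + coordProj R W := by
  rw [coordProj, coordProj, coordProj, Matrix.diagonal_add]
  congr with i
  by_cases hV : i ∈ V
  · simp [hV, Finset.disjoint_left.1 h hV]
  · simp [hV]

variable [Fintype Δ]

theorem zeroPad_mul_zeroPad [NonUnitalNonAssocSemiring R] (V : Finset Δ) (M N : Matrix V V R) :
    zeroPad V M * zeroPad V N = zeroPad V (M * N) := by
  ext i j
  have hsum : (zeroPad V M * zeroPad V N) i j = ∑ k : V, zeroPad V M i k * zeroPad V N k j := by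
    rw [Matrix.mul_apply, Finset.sum_coe_sort V fun k => zeroPad V M i k * zeroPad V N k j]
    refine (Finset.sum_subset V.subset_univ fun k _ hk => ?_).symm
    simp [zeroPad, hk]
  rw [hsum]
  by_cases hi : i ∈ V <;> by_cases hj : j ∈ V <;> simp [zeroPad, Matrix.mul_apply, hi, hj]

theorem zeroPad_block [NonAssocSemiring R] (K : Matrix Δ Δ R) (V : Finset Δ) :
    zeroPad V (block K V V) = coordProj R V * K * coordProj R V := by
  ext i j
  by_cases hi : i ∈ V <;> by_cases hj : j ∈ V <;> simp [zeroPad, coordProj, hi, hj]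

theorem coordProj_mul_zeroPad [NonAssocSemiring R] (V : Finset Δ) (M : Matrix V V R) :
    coordProj R V * zeroPad V M = zeroPad V M := by
  rw [← zeroPad_one, zeroPad_mul_zeroPad, Matrix.one_mul]

theorem zeroPad_mul_coordProj [NonAssocSemiring R] (V : Finset Δ) (M : Matrix V V R) :
    zeroPad V M * coordProj R V = zeroPad V M := by
  rw [← zeroPad_one, zeroPad_mul_zeroPad, Matrix.mul_one]

theorem coordProj_mul_mul_coordProj_eq_zero [NonAssocSemiring R] {K : Matrix Δ Δ R}
    {V W : Finset Δ} (h : block K V W = 0) : coordProj R V * K * coordProj R W = 0 := by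
  have hK : ∀ i ∈ V, ∀ j ∈ W, K i j = 0 := fun i hi j hj => congr_fun₂ h ⟨i, hi⟩ ⟨j, hj⟩
  ext i j
  by_cases hi : i ∈ V <;> by_cases hj : j ∈ W <;> simp [coordProj, hi, hj, hK]

theorem coordProj_mul_coordProj_of_disjoint [NonAssocSemiring R] {V W : Finset Δ}
    (h : Disjoint V W) : coordProj R V * coordProj R W = 0 := by
  have hVW : block (1 : Matrix Δ Δ R) V W = 0 := by
    ext i j
    exact Matrix.one_apply_ne (Finset.disjoint_iff_ne.1 h i i.2 j j.2)
  simpa only [Matrix.mul_one] using coordProj_mul_mul_coordProj_eq_zero hVW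

theorem coordProj_eq_one_sub [AddGroupWithOne R] {V W : Finset Δ} (h : IsCompl V W) :
    coordProj R V = 1 - coordProj R W := by
  rw [eq_sub_iff_add_eq, ← coordProj_union h.disjoint, ← Finset.sup_eq_union, h.sup_eq_top]
  simp [coordProj]

end ZeroPad

section Inverse

variable {Δ R : Type*} [DecidableEq Δ] [Fintype Δ] [CommRing R]

theorem isCornerInverse_zeroPad_inv {K : Matrix Δ Δ R} {V : Finset Δ}
    (hV : IsUnit (block K V V).det) :
    IsCornerInverse (coordProj R V) K (zeroPad V (block K V V)⁻¹) where
  proj_mul := coordProj_mul_zeroPad V _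
  mul_proj := zeroPad_mul_coordProj V _
  inv_mul := by
    rw [← zeroPad_mul_coordProj, mul_assoc, mul_assoc, ← mul_assoc (coordProj R V),
      ← zeroPad_block, zeroPad_mul_zeroPad, Matrix.nonsing_inv_mul _ hV, zeroPad_one]
  mul_inv := by
    rw [← coordProj_mul_zeroPad, ← mul_assoc, ← zeroPad_block, zeroPad_mul_zeroPad,
      Matrix.mul_nonsing_inv _ hV, zeroPad_one]

theorem IsCornerInverse.zeroPad_inv_block {N Y : Matrix Δ Δ R} {V : Finset Δ}
    (hY : IsCornerInverse (coordProj R V) N Y) : zeroPad V (block N V V)⁻¹ = Y := by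
  have hpad : zeroPad V (block Y V V) = Y := by rw [zeroPad_block, hY.proj_mul, hY.mul_proj]
  have hmul : block Y V V * block N V V = 1 := by
    rw [← block_zeroPad V (block Y V V * block N V V), ← zeroPad_mul_zeroPad, hpad, zeroPad_block,
      ← mul_assoc, ← mul_assoc, hY.mul_proj, hY.inv_mul, ← zeroPad_one, block_zeroPad]
  rw [Matrix.inv_eq_left_inv hmul, hpad]

theorem IsCornerInverse.zeroPad_inv_block_inv {K Y : Matrix Δ Δ R} {V W : Finset Δ}
    (hY : IsCornerInverse (coordProj R W) K Y) (hVW : IsCompl V W) (hK : IsUnit K.det) :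
    zeroPad V (block K⁻¹ V V)⁻¹ = K - K * Y * K := by
  apply zeroPad_inv_block
  rw [coordProj_eq_one_sub hVW]
  exact hY.one_sub (Matrix.mul_nonsing_inv K hK) (Matrix.nonsing_inv_mul K hK)

end Inverse

theorem stmt_11_general {Δ R : Type*} [Fintype Δ] [DecidableEq Δ] [CommRing R] {A B S : Finset Δ}
    (hAB : Disjoint A B) (hAS : Disjoint A S) (hBS : Disjoint B S)
    (hunion : A ∪ B ∪ S = Finset.univ) {K : Matrix Δ Δ R} (hK : IsUnit K.det)
    (hKA : IsUnit (block K A A).det) (hKB : IsUnit (block K B B).det)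
    (hKAB : block K A B = 0) (hKBA : block K B A = 0) :
    K = zeroPad (A ∪ S) (block K⁻¹ (A ∪ S) (A ∪ S))⁻¹
        + zeroPad (B ∪ S) (block K⁻¹ (B ∪ S) (B ∪ S))⁻¹
        - zeroPad S (block K⁻¹ S S)⁻¹ := by
  have hcA := isCornerInverse_zeroPad_inv hKA
  have hcB := isCornerInverse_zeroPad_inv hKB
  have hcAB := hcA.add hcB (coordProj_mul_coordProj_of_disjoint hAB)
    (coordProj_mul_coordProj_of_disjoint hAB.symm) (coordProj_mul_mul_coordProj_eq_zero hKAB)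
    (coordProj_mul_mul_coordProj_eq_zero hKBA)
  rw [← coordProj_union hAB] at hcAB
  have hV : IsCompl (A ∪ S) B := ⟨Finset.disjoint_union_left.2 ⟨hAB, hBS.symm⟩,
    codisjoint_iff.2 (by rw [Finset.sup_eq_union, Finset.union_right_comm, hunion]; rfl)⟩
  have hV' : IsCompl (B ∪ S) A := ⟨Finset.disjoint_union_left.2 ⟨hAB.symm, hAS.symm⟩,
    codisjoint_iff.2 (by
      rw [Finset.sup_eq_union, Finset.union_comm, ← Finset.union_assoc, hunion]; rfl)⟩
  have hS : IsCompl S (A ∪ B) := ⟨Finset.disjoint_union_right.2 ⟨hAS.symm, hBS.symm⟩,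
    codisjoint_iff.2 (by rw [Finset.sup_eq_union, Finset.union_comm, hunion]; rfl)⟩
  rw [hcB.zeroPad_inv_block_inv hV hK, hcA.zeroPad_inv_block_inv hV' hK,
    hcAB.zeroPad_inv_block_inv hS hK]
  noncomm_ring

/-- A positive definite concentration matrix vanishing on `A × B` decomposes as the
sum of the zero-padded inverses of the `V`- and `V'`-marginals of its inverse minus
the zero-padded inverse of the `S`-marginal of its inverse, where `V = A ∪ S` and
`V' = B ∪ S`. -/
theorem stmt_11 {Δ : Type*} [Fintype Δ] [DecidableEq Δ]
    (A B S : Finset Δ)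
    (hAB : Disjoint A B) (hAS : Disjoint A S) (hBS : Disjoint B S)
    (hunion : A ∪ B ∪ S = Finset.univ)
    (hA : A.Nonempty) (hB : B.Nonempty) (hS : S.Nonempty)
    (K : Matrix Δ Δ ℝ) (hsymm : K.IsSymm) (hK : K.PosDef)
    (hzero : msub K A B = 0)
    (V V' : Finset Δ) (hV : V = A ∪ S) (hV' : V' = B ∪ S) :
    K = pad V ((msub K⁻¹ V V)⁻¹) + pad V' ((msub K⁻¹ V' V')⁻¹)
        - pad S ((msub K⁻¹ S S)⁻¹) := by
  subst hV hV'
  have isUnit_det_block (W : Finset Δ) : IsUnit (block K W W).det :=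
    (hK.submatrix Subtype.val_injective).det_pos.ne'.isUnit
  have hzero' : block K B A = 0 := by
    rw [← hsymm.eq]
    exact congrArg Matrix.transpose hzero
  exact stmt_11_general hAB hAS hBS hunion hK.det_pos.ne'.isUnit (isUnit_det_block A)
    (isUnit_det_block B) hzero hzero'
end

section
/- Let Δ be a finite index set partitioned into disjoint nonempty subsets A, B, and S, and let K be a symmetric positive definite real matrix indexed by Δ with K_{AB} = 0. Set V := A ∪ S. Then for all i, j ∈ V with i ∈ A or j ∈ A, the (i, j) entry of ((K^{-1})_{VV})^{-1} equals k_{ij}; that is, ((K^{-1})_{VV})^{-1} differs from K_{VV} only on the S × S block. -/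
open Matrix

/-!
For `i ∈ A`, row `i` of `K` is supported on `V = A ∪ S`, since `K` vanishes on `A × B`. The
identity `K * K⁻¹ = 1` in row `i` is therefore a sum over `V` alone and says that the restriction
of this row to `V` times `(K⁻¹)_{VV}` is the `i`-th unit row vector. Multiplying by the inverse of
`(K⁻¹)_{VV}` identifies this restriction with row `i` of `((K⁻¹)_{VV})⁻¹`. Columns are treated
by transposition.
-/

section InvSubmatrix

variable {R m n : Type*} [Fintype m] [Fintype n]

theorem comp_vecMul_submatrix_of_forall_notMem_range [NonUnitalNonAssocSemiring R] {k l : Type*}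
    (M : Matrix m k R) {e : n → m} (he : Function.Injective e) (f : l → k) {v : m → R}
    (hv : ∀ x ∉ Set.range e, v x = 0) :
    (v ∘ e) ᵥ* M.submatrix e f = (v ᵥ* M) ∘ f := by
  ext j
  refine Fintype.sum_of_injective e he _ _ (fun x hx => ?_) (fun _ => rfl)
  rw [hv x hx, zero_mul]

variable [CommRing R] [DecidableEq m] [DecidableEq n]

theorem row_inv_eq_of_vecMul_eq_single {P : Matrix n n R} (hP : IsUnit P.det) {v : n → R} {i : n}
    (hv : v ᵥ* P = Pi.single i 1) : P⁻¹.row i = v :=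
  calc
    P⁻¹.row i = Pi.single i 1 ᵥ* P⁻¹ := (single_one_vecMul i P⁻¹).symm
    _ = v ᵥ* P ᵥ* P⁻¹ := by rw [hv]
    _ = v := by rw [vecMul_vecMul, mul_nonsing_inv P hP, vecMul_one]

variable {K : Matrix m m R} {e : n → m}

theorem inv_submatrix_inv_apply_of_row_support (hK : IsUnit K.det) (he : Function.Injective e)
    (hKe : IsUnit (K⁻¹.submatrix e e).det) {i : n} (hrow : ∀ x ∉ Set.range e, K (e i) x = 0)
    (j : n) : (K⁻¹.submatrix e e)⁻¹ i j = K (e i) (e j) := by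
  have row_vecMul_inv : K.row (e i) ᵥ* K⁻¹ = Pi.single (e i) 1 := by
    rw [← single_one_vecMul (e i) K, vecMul_vecMul, mul_nonsing_inv K hK, vecMul_one]
  have restricted : (K.row (e i) ∘ e) ᵥ* K⁻¹.submatrix e e = Pi.single i 1 := by
    rw [comp_vecMul_submatrix_of_forall_notMem_range (v := K.row (e i)) K⁻¹ he e hrow,
      row_vecMul_inv]
    ext l
    simp only [Function.comp_apply, Pi.single_apply, he.eq_iff]
  exact congrFun (row_inv_eq_of_vecMul_eq_single hKe restricted) j

theorem inv_submatrix_inv_apply_of_col_support (hK : IsUnit K.det) (he : Function.Injective e)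
    (hKe : IsUnit (K⁻¹.submatrix e e).det) {j : n} (hcol : ∀ x ∉ Set.range e, K x (e j) = 0)
    (i : n) : (K⁻¹.submatrix e e)⁻¹ i j = K (e i) (e j) := by
  have submatrix_transpose : Kᵀ⁻¹.submatrix e e = (K⁻¹.submatrix e e)ᵀ := by
    rw [← transpose_nonsing_inv, transpose_submatrix]
  have transposed : (Kᵀ⁻¹.submatrix e e)⁻¹ j i = Kᵀ (e j) (e i) :=
    inv_submatrix_inv_apply_of_row_support (by rwa [det_transpose]) he
      (by rwa [submatrix_transpose, det_transpose]) hcol i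
  rwa [submatrix_transpose, ← transpose_nonsing_inv] at transposed

end InvSubmatrix

theorem stmt_12_general {R Δ : Type*} [CommRing R] [Fintype Δ] [DecidableEq Δ]
    (A B S : Finset Δ) (hunion : A ∪ B ∪ S = Finset.univ)
    (K : Matrix Δ Δ R) (hK : IsUnit K.det)
    (hAB : K.submatrix ((↑) : A → Δ) ((↑) : B → Δ) = 0)
    (hBA : K.submatrix ((↑) : B → Δ) ((↑) : A → Δ) = 0)
    (V : Finset Δ) (hV : V = A ∪ S)
    (hKV : IsUnit (K⁻¹.submatrix ((↑) : V → Δ) ((↑) : V → Δ)).det) :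
    ∀ i j : V, (↑i ∈ A ∨ ↑j ∈ A) →
      (K⁻¹.submatrix ((↑) : V → Δ) ((↑) : V → Δ))⁻¹ i j = K ↑i ↑j := by
  have mem_B : ∀ x ∉ Set.range ((↑) : V → Δ), x ∈ B := by
    intro x hx
    have hxV : x ∉ A ∪ S := fun h => hx ⟨⟨x, hV ▸ h⟩, rfl⟩
    have hxABS : x ∈ A ∪ B ∪ S := hunion ▸ Finset.mem_univ x
    grind
  rintro i j (hi | hj)
  · exact inv_submatrix_inv_apply_of_row_support hK Subtype.val_injective hKV
      (fun x hx => congrFun₂ hAB ⟨i, hi⟩ ⟨x, mem_B x hx⟩) j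
  · exact inv_submatrix_inv_apply_of_col_support hK Subtype.val_injective hKV
      (fun x hx => congrFun₂ hBA ⟨x, mem_B x hx⟩ ⟨j, hj⟩) i

/-- For a positive definite `K` vanishing on `A × B` and `V = A ∪ S`, the matrix
`((K⁻¹)_{VV})⁻¹` differs from `K_{VV}` only on the `S × S` block. -/
theorem stmt_12 {Δ : Type*} [Fintype Δ] [DecidableEq Δ]
    (A B S : Finset Δ)
    (hAB : Disjoint A B) (hAS : Disjoint A S) (hBS : Disjoint B S)
    (hunion : A ∪ B ∪ S = Finset.univ)
    (hA : A.Nonempty) (hB : B.Nonempty) (hS : S.Nonempty)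
    (K : Matrix Δ Δ ℝ) (hsymm : K.IsSymm) (hK : K.PosDef)
    (hzero : msub K A B = 0)
    (V : Finset Δ) (hV : V = A ∪ S) :
    ∀ i j : V, (↑i ∈ A ∨ ↑j ∈ A) → ((msub K⁻¹ V V)⁻¹) i j = K ↑i ↑j := by
  have hBA : msub K B A = 0 := by ext b a; exact (hsymm.apply a b).trans (congrFun₂ hzero a b)
  exact stmt_12_general A B S hunion K hK.det_pos.ne'.isUnit hzero hBA V hV
    (hK.inv.submatrix Subtype.val_injective).det_pos.ne'.isUnit
end

section
/- Let Δ be a finite index set partitioned into disjoint nonempty subsets A, B, and S, and let K be a symmetric positive definite real matrix indexed by Δ with K_{AB} = 0. Then the inverse of the S-marginal of K^{-1} satisfies ((K^{-1})_{SS})^{-1} = K_{SS} − K_{SA} (K_{AA})^{-1} K_{AS} − K_{SB} (K_{BB})^{-1} K_{BS}. -/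
open Matrix

/-! The inverse of the `S`-block of `K⁻¹` is the Schur complement of the complementary block
`K_{A ∪ B, A ∪ B}` in `K`. Since `K_{AB}` and `K_{BA}` vanish, that block is block diagonal, so its
inverse is too, and the correction term of the Schur complement splits into one term for `A` and
one for `B`. -/

section Submatrix

variable {ι κ l m n o R : Type*}

theorem submatrix_sumElim_left (K : Matrix ι κ R) (f : m → ι) (g : n → ι) (h : o → κ) :
    K.submatrix (Sum.elim f g) h = fromRows (K.submatrix f h) (K.submatrix g h) := by
  ext (i | i) j <;> rfl

theorem submatrix_sumElim_right (K : Matrix ι κ R) (f : o → ι) (g : m → κ) (h : n → κ) :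
    K.submatrix f (Sum.elim g h) = fromCols (K.submatrix f g) (K.submatrix f h) := by
  ext i (j | j) <;> rfl

theorem submatrix_sumElim_sumElim (K : Matrix ι κ R) (f : l → ι) (g : m → ι) (f' : n → κ)
    (g' : o → κ) :
    K.submatrix (Sum.elim f g) (Sum.elim f' g') =
      fromBlocks (K.submatrix f f') (K.submatrix f g') (K.submatrix g f') (K.submatrix g g') := by
  rw [submatrix_sumElim_left, submatrix_sumElim_right, submatrix_sumElim_right,
    fromRows_fromCols_eq_fromBlocks]

end Submatrix

section SchurComplement

variable {Δ a b s R : Type*} [CommRing R] [Fintype Δ] [DecidableEq Δ] [Fintype a] [DecidableEq a]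
  [Fintype b] [DecidableEq b] [Fintype s] [DecidableEq s]

theorem inv_toBlocks₂₂_inv_fromBlocks (P : Matrix a a R) (Q : Matrix a s R) (T : Matrix s a R)
    (D : Matrix s s R) (hP : IsUnit P) (hM : IsUnit (fromBlocks P Q T D)) :
    ((fromBlocks P Q T D)⁻¹.toBlocks₂₂)⁻¹ = D - T * P⁻¹ * Q := by
  let := hP.invertible
  let := hM.invertible
  let := invertibleOfFromBlocks₁₁Invertible P Q T D
  rw [← invOf_eq_nonsing_inv (fromBlocks P Q T D), invOf_fromBlocks₁₁_eq, toBlocks_fromBlocks₂₂,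
    ← invOf_eq_nonsing_inv, invOf_invOf, invOf_eq_nonsing_inv]

theorem inv_submatrix_inv_eq_schurComplement (K : Matrix Δ Δ R) (f : a → Δ) (h : s → Δ)
    (hbij : (Sum.elim f h).Bijective) (hK : IsUnit K) (hf : IsUnit (K.submatrix f f)) :
    (K⁻¹.submatrix h h)⁻¹ =
      K.submatrix h h - K.submatrix h f * (K.submatrix f f)⁻¹ * K.submatrix f h := by
  let e : a ⊕ s ≃ Δ := Equiv.ofBijective _ hbij
  have hblocks : K.submatrix e e = fromBlocks (K.submatrix f f) (K.submatrix f h)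
      (K.submatrix h f) (K.submatrix h h) := submatrix_sumElim_sumElim K f h f h
  have hmarginal : K⁻¹.submatrix h h = (K.submatrix e e)⁻¹.toBlocks₂₂ := by
    rw [inv_submatrix_equiv]
    rfl
  have hunit : IsUnit (K.submatrix e e) := (isUnit_submatrix_equiv e e).2 hK
  rw [hblocks] at hmarginal hunit
  rw [hmarginal, inv_toBlocks₂₂_inv_fromBlocks _ _ _ _ hf hunit]

theorem fromCols_mul_inv_fromBlocks_diagonal_mul_fromRows {m n : Type*} (P : Matrix a a R)
    (Q : Matrix b b R) (C₁ : Matrix m a R) (C₂ : Matrix m b R) (D₁ : Matrix a n R)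
    (D₂ : Matrix b n R) (hPQ : IsUnit P ↔ IsUnit Q) :
    fromCols C₁ C₂ * (fromBlocks P 0 0 Q)⁻¹ * fromRows D₁ D₂ =
      C₁ * P⁻¹ * D₁ + C₂ * Q⁻¹ * D₂ := by
  simp [inv_fromBlocks_zero₁₂_of_isUnit_iff P 0 Q hPQ, fromCols_mul_fromBlocks,
    fromCols_mul_fromRows]

theorem stmt_13_general (K : Matrix Δ Δ R) (f : a → Δ) (g : b → Δ) (h : s → Δ)
    (hbij : (Sum.elim (Sum.elim f g) h).Bijective) (hK : IsUnit K)
    (hf : IsUnit (K.submatrix f f)) (hg : IsUnit (K.submatrix g g))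
    (hfg : K.submatrix f g = 0) (hgf : K.submatrix g f = 0) :
    (K⁻¹.submatrix h h)⁻¹ =
      K.submatrix h h - K.submatrix h f * (K.submatrix f f)⁻¹ * K.submatrix f h
        - K.submatrix h g * (K.submatrix g g)⁻¹ * K.submatrix g h := by
  have hdiag : K.submatrix (Sum.elim f g) (Sum.elim f g) =
      fromBlocks (K.submatrix f f) 0 0 (K.submatrix g g) := by
    rw [submatrix_sumElim_sumElim, hfg, hgf]
  have hunit : IsUnit (K.submatrix (Sum.elim f g) (Sum.elim f g)) := by
    rw [hdiag]
    exact isUnit_fromBlocks_zero₁₂.2 ⟨hf, hg⟩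
  rw [inv_submatrix_inv_eq_schurComplement K _ h hbij hK hunit, hdiag, submatrix_sumElim_left,
    submatrix_sumElim_right,
    fromCols_mul_inv_fromBlocks_diagonal_mul_fromRows _ _ _ _ _ _ (iff_of_true hf hg), sub_sub]

end SchurComplement

theorem bijective_sumElim_coe_of_partition {Δ : Type*} [Fintype Δ] [DecidableEq Δ]
    {A B S : Finset Δ} (hAB : Disjoint A B) (hAS : Disjoint A S) (hBS : Disjoint B S)
    (hunion : A ∪ B ∪ S = Finset.univ) :
    (Sum.elim (Sum.elim ((↑) : A → Δ) ((↑) : B → Δ)) ((↑) : S → Δ)).Bijective := by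
  constructor
  · refine (Subtype.val_injective.sumElim Subtype.val_injective fun i j ↦ ?_).sumElim
      Subtype.val_injective ?_
    · exact Finset.disjoint_iff_ne.1 hAB _ i.2 _ j.2
    · rintro (i | i) j
      · exact Finset.disjoint_iff_ne.1 hAS _ i.2 _ j.2
      · exact Finset.disjoint_iff_ne.1 hBS _ i.2 _ j.2
  · intro x
    have hx : x ∈ A ∪ B ∪ S := hunion ▸ Finset.mem_univ x
    simpa [or_assoc] using hx

/-- For a positive definite `K` vanishing on `A × B`, the inverse of the
`S`-marginal of `K⁻¹` is given by the two-sided Schur complement formula. -/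
theorem stmt_13 {Δ : Type*} [Fintype Δ] [DecidableEq Δ]
    (A B S : Finset Δ)
    (hAB : Disjoint A B) (hAS : Disjoint A S) (hBS : Disjoint B S)
    (hunion : A ∪ B ∪ S = Finset.univ)
    (hA : A.Nonempty) (hB : B.Nonempty) (hS : S.Nonempty)
    (K : Matrix Δ Δ ℝ) (hsymm : K.IsSymm) (hK : K.PosDef)
    (hzero : msub K A B = 0) :
    (msub K⁻¹ S S)⁻¹ =
      msub K S S - msub K S A * (msub K A A)⁻¹ * msub K A S
        - msub K S B * (msub K B B)⁻¹ * msub K B S := by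
  have hzero' : msub K B A = 0 := by
    simpa [msub, transpose_submatrix, hsymm.eq] using congrArg transpose hzero
  exact stmt_13_general K _ _ _ (bijective_sumElim_coe_of_partition hAB hAS hBS hunion) hK.isUnit
    (hK.submatrix Subtype.val_injective).isUnit (hK.submatrix Subtype.val_injective).isUnit
    hzero hzero'
end
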